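/- arXiv:2601.07804 — 4 statements merged into one kernel-verified Lean document; each statement's English description precedes it below -/
import Mathlib

section
/- Let F be the local Hutchinson–Barnsley operator of a local IFS on a compact metric space X, and let A := ⋃{B ⊆ X : F(B) = B} be its local attractor; assume A ≠ ∅. If A_0 ⊆ X is closed, F-positively invariant, and A ⊆ A_0, then A = ⋂_{i ≥ 0} F^i(A_0). In particular, taking A_0 = X, one has A = ⋂_{i ≥ 0} F^i(X), and A is a compact subset of X. -/
/-!
The local attractor is the largest fixed point of the monotone operator `F`, so it lies in every
`F^[i] A₀` as soon as it lies in `A₀`. Conversely the sets `F^[i] A₀` are compact and decreasing,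
and `F` commutes with such intersections: `x ∈ F B` says that `B` meets the closed set
`⋃ j, Xs j ∩ f j ⁻¹' {x}` of `F`-preimages of `x`, and a closed set meeting every member of a
decreasing family of compact sets meets their intersection. Hence `⋂ i, F^[i] A₀` is itself a
fixed point and is contained in the attractor.
-/

open Function Set

section CompleteLattice

variable {α : Type*} [CompleteLattice α] {F : α → α} {a : α}

theorem sSup_fixedPoints_le_iInf_iterate (hF : Monotone F) (ha : sSup (fixedPoints F) ≤ a) :
    sSup (fixedPoints F) ≤ ⨅ i : ℕ, F^[i] a := by
  refine sSup_le fun b hb => le_iInf fun i => ?_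
  calc
    b = F^[i] b := (hb.iterate i).symm
    _ ≤ F^[i] a := hF.iterate i ((le_sSup hb).trans ha)

theorem isFixedPt_iInf_iterate (hF : Monotone F) (ha : F a ≤ a)
    (hcomm : F (⨅ i : ℕ, F^[i] a) = ⨅ i : ℕ, F (F^[i] a)) :
    IsFixedPt F (⨅ i : ℕ, F^[i] a) :=
  calc
    F (⨅ i : ℕ, F^[i] a) = ⨅ i : ℕ, F^[i + 1] a := by simp only [hcomm, iterate_succ_apply']
    _ = ⨅ i : ℕ, F^[i] a := (hF.antitone_iterate_of_map_le ha).iInf_nat_add 1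

theorem sSup_fixedPoints_eq_iInf_iterate (hF : Monotone F) (ha : F a ≤ a)
    (hle : sSup (fixedPoints F) ≤ a) (hcomm : F (⨅ i : ℕ, F^[i] a) = ⨅ i : ℕ, F (F^[i] a)) :
    sSup (fixedPoints F) = ⨅ i : ℕ, F^[i] a :=
  (sSup_fixedPoints_le_iInf_iterate hF hle).antisymm
    (le_sSup (isFixedPt_iInf_iterate hF ha hcomm))

end CompleteLattice

section LocalIFS

variable {X ι : Type*}

/-- The local Hutchinson–Barnsley operator of the local IFS given by maps `f j` with domains
`Xs j`. The `f j` are total functions, of which only the restrictions to `Xs j` matter. -/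
def localHutchinson (f : ι → X → X) (Xs : ι → Set X) (B : Set X) : Set X :=
  ⋃ j, f j '' (B ∩ Xs j)

/-- The local attractor of a local IFS: the union of all sets fixed by its local
Hutchinson–Barnsley operator. -/
def localAttractor (f : ι → X → X) (Xs : ι → Set X) : Set X :=
  ⋃₀ fixedPoints (localHutchinson f Xs)

variable {f : ι → X → X} {Xs : ι → Set X}

theorem mem_localHutchinson_iff {B : Set X} {x : X} :
    x ∈ localHutchinson f Xs B ↔ (B ∩ ⋃ j, Xs j ∩ f j ⁻¹' {x}).Nonempty := by
  simp only [localHutchinson, mem_iUnion, inter_iUnion, nonempty_iUnion, ← inter_assoc,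
    ← image_inter_nonempty_iff, inter_singleton_nonempty]

theorem localHutchinson_mono : Monotone (localHutchinson f Xs) := fun _ _ h =>
  iUnion_mono fun _ => image_mono (inter_subset_inter_left _ h)

variable [TopologicalSpace X] [Finite ι]

theorem isCompact_localHutchinson (hXs : ∀ j, IsClosed (Xs j))
    (hf : ∀ j, ContinuousOn (f j) (Xs j)) {B : Set X} (hB : IsCompact B) :
    IsCompact (localHutchinson f Xs B) :=
  isCompact_iUnion fun j =>
    (hB.inter_right (hXs j)).image_of_continuousOn ((hf j).mono inter_subset_right)

theorem isCompact_iterate_localHutchinson (hXs : ∀ j, IsClosed (Xs j))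
    (hf : ∀ j, ContinuousOn (f j) (Xs j)) {B : Set X} (hB : IsCompact B) (i : ℕ) :
    IsCompact ((localHutchinson f Xs)^[i] B) :=
  Iterate.rec IsCompact hB (fun _ => isCompact_localHutchinson hXs hf) i

theorem isClosed_iUnion_inter_preimage_singleton [T1Space X] (hXs : ∀ j, IsClosed (Xs j))
    (hf : ∀ j, ContinuousOn (f j) (Xs j)) (x : X) : IsClosed (⋃ j, Xs j ∩ f j ⁻¹' {x}) :=
  isClosed_iUnion_of_finite fun j =>
    (hf j).preimage_isClosed_of_isClosed (hXs j) isClosed_singleton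

variable [T2Space X]

theorem localHutchinson_iInter_of_directed {κ : Type*} [Nonempty κ] {K : κ → Set X}
    (hXs : ∀ j, IsClosed (Xs j)) (hf : ∀ j, ContinuousOn (f j) (Xs j))
    (hKdir : Directed (· ⊇ ·) K) (hK : ∀ k, IsCompact (K k)) :
    localHutchinson f Xs (⋂ k, K k) = ⋂ k, localHutchinson f Xs (K k) := by
  refine Subset.antisymm localHutchinson_mono.map_iInf_le fun x hx => ?_
  have hS : IsClosed (⋃ j, Xs j ∩ f j ⁻¹' {x}) :=
    isClosed_iUnion_inter_preimage_singleton hXs hf x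
  rw [mem_localHutchinson_iff, iInter_inter]
  exact IsCompact.nonempty_iInter_of_directed_nonempty_isCompact_isClosed _
    (hKdir.mono_comp (· ⊇ ·) (g := (· ∩ _)) fun _ _ h => inter_subset_inter_left _ h)
    (fun k => mem_localHutchinson_iff.1 (mem_iInter.1 hx k))
    (fun k => (hK k).inter_right hS) (fun k => (hK k).isClosed.inter hS)

theorem attractor_eq_iInter_of_posInvariant_general
    (hXs : ∀ j, IsClosed (Xs j)) (hf : ∀ j, ContinuousOn (f j) (Xs j)) {A₀ : Set X}
    (hA₀ : IsCompact A₀) (hinv : localHutchinson f Xs A₀ ⊆ A₀) (hsub : localAttractor f Xs ⊆ A₀) :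
    localAttractor f Xs = ⋂ i : ℕ, (localHutchinson f Xs)^[i] A₀ ∧
      IsCompact (localAttractor f Xs) := by
  have hcompact : ∀ i, IsCompact ((localHutchinson f Xs)^[i] A₀) :=
    isCompact_iterate_localHutchinson hXs hf hA₀
  have hanti : Antitone fun i : ℕ => (localHutchinson f Xs)^[i] A₀ :=
    localHutchinson_mono.antitone_iterate_of_map_le hinv
  have hattr : localAttractor f Xs = ⋂ i : ℕ, (localHutchinson f Xs)^[i] A₀ :=
    sSup_fixedPoints_eq_iInf_iterate localHutchinson_mono hinv hsub
      (localHutchinson_iInter_of_directed hXs hf hanti.directed_ge hcompact)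
  have hclosed : IsClosed (localAttractor f Xs) :=
    hattr ▸ isClosed_iInter fun i => (hcompact i).isClosed
  exact ⟨hattr, hA₀.of_isClosed_subset hclosed hsub⟩

end LocalIFS

/-- If the local attractor `A = ⋃ {B : F B = B}` of a local IFS is
nonempty, then for every closed `F`-positively invariant set `A₀ ⊇ A` one has
`A = ⋂ i, F^[i] A₀`; in particular `A = ⋂ i, F^[i] X` and `A` is compact. -/
theorem attractor_eq_iInter_of_posInvariant {X : Type*} [MetricSpace X] [CompactSpace X]
    {n : ℕ} (hn : 0 < n)
    (Xs : Fin n → Set X) (hXs : ∀ j, IsClosed (Xs j))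
    (f : Fin n → X → X) (hf : ∀ j, ContinuousOn (f j) (Xs j))
    (F : Set X → Set X) (hF : ∀ B, F B = ⋃ j, f j '' (B ∩ Xs j))
    (A : Set X) (hA : A = ⋃₀ {B : Set X | F B = B}) (hAne : A.Nonempty) :
    (∀ A₀ : Set X, IsClosed A₀ → F A₀ ⊆ A₀ → A ⊆ A₀ → A = ⋂ i : ℕ, F^[i] A₀) ∧
      A = (⋂ i : ℕ, F^[i] (Set.univ : Set X)) ∧ IsCompact A := by
  obtain rfl : F = localHutchinson f Xs := funext hF
  obtain rfl : A = localAttractor f Xs := hA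
  exact ⟨fun A₀ hA₀ hinv hsub =>
      (attractor_eq_iInter_of_posInvariant_general hXs hf hA₀.isCompact hinv hsub).1,
    attractor_eq_iInter_of_posInvariant_general hXs hf isCompact_univ
      (subset_univ _) (subset_univ _)⟩
end

section
/- Let a contractive local IFS on a compact metric space X have code space Σ and code map π (so π(b) is the unique point of ⋂_{k≥1} V_b(k) for b ∈ Σ). If b ∈ Σ and 1 ≤ j ≤ n is such that π(b) ∈ X_j, then the concatenation b∗j belongs to Σ and π(b∗j) = f_j(π(b)). -/
/-- The cylinder sets of a local IFS: `cylinder f Xs k b` is the set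
`V_b(k+1)` of the left-infinite word encoded by `b : ℕ → Fin n`. -/
def cylinder {X : Type*} {n : ℕ} (f : Fin n → X → X) (Xs : Fin n → Set X) :
    ℕ → (ℕ → Fin n) → Set X
  | 0, b => f (b 0) '' Xs (b 0)
  | k + 1, b => f (b 0) '' (cylinder f Xs k (fun j => b (j + 1)) ∩ Xs (b 0))

/-- The code space of a local IFS: the set of left-infinite words all of whose
cylinder sets are nonempty. -/
def codeSpace {X : Type*} {n : ℕ} (f : Fin n → X → X) (Xs : Fin n → Set X) :
    Set (ℕ → Fin n) :=
  {b | ∀ k : ℕ, (cylinder f Xs k b).Nonempty}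

/-- Concatenation `b ∗ j` of a left-infinite word `b` with a symbol `j`:
`(b∗j)(0) = j` and `(b∗j)(k+1) = b k`. -/
def concat {n : ℕ} (b : ℕ → Fin n) (j : Fin n) : ℕ → Fin n
  | 0 => j
  | k + 1 => b k

/-!
A point that lies in all cylinders of `b` and in `X_j` is sent by `f_j` into all cylinders of
`b ∗ j`, since the `(k+1)`-st cylinder of `b ∗ j` is the image under `f_j` of the part in `X_j` of
the `k`-th cylinder of `b`. Each step of this recursion shrinks diameters, finite to begin with, by a
common factor less than `1`. Hence the cylinders of a word share at most one point, and
`f_j (π b)` must be `π (b ∗ j)`.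
-/

open Filter Metric Topology
open scoped NNReal ENNReal

theorem ediam_image_le_of_lipschitzOnWith {X Y : Type*} [PseudoEMetricSpace X]
    [PseudoEMetricSpace Y] {K : ℝ≥0} {g : X → Y} {s : Set X} (hg : LipschitzOnWith K g s) :
    ediam (g '' s) ≤ K * ediam s :=
  ediam_image_le_iff.2 fun _x hx _y hy =>
    (hg hx hy).trans (mul_le_mul_right (edist_le_ediam_of_mem hx hy) _)

section Cylinder

variable {X : Type*} {n : ℕ} {f : Fin n → X → X} {Xs : Fin n → Set X}

theorem mapsTo_iInter_cylinder_concat (b : ℕ → Fin n) (j : Fin n) :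
    Set.MapsTo (f j) ((⋂ k, cylinder f Xs k b) ∩ Xs j) (⋂ k, cylinder f Xs k (concat b j)) := by
  rintro x ⟨hx, hxj⟩
  refine Set.mem_iInter.2 fun k => ?_
  cases k with
  | zero => exact Set.mem_image_of_mem (f j) hxj
  | succ k => exact Set.mem_image_of_mem (f j) ⟨Set.mem_iInter.1 hx k, hxj⟩

theorem ediam_cylinder_le [PseudoEMetricSpace X] {L : ℝ≥0}
    (hf : ∀ j, LipschitzOnWith L (f j) (Xs j)) (k : ℕ) (b : ℕ → Fin n) :
    ediam (cylinder f Xs k b) ≤ L ^ (k + 1) * ⨆ j, ediam (Xs j) := by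
  induction k generalizing b with
  | zero =>
    calc ediam (f (b 0) '' Xs (b 0))
      _ ≤ L * ediam (Xs (b 0)) := ediam_image_le_of_lipschitzOnWith (hf _)
      _ ≤ L ^ (0 + 1) * ⨆ j, ediam (Xs j) := by
        rw [zero_add, pow_one]
        gcongr
        exact le_iSup (fun j => ediam (Xs j)) (b 0)
  | succ k ih =>
    let C := cylinder f Xs k fun i => b (i + 1)
    calc ediam (f (b 0) '' (C ∩ Xs (b 0)))
      _ ≤ L * ediam (C ∩ Xs (b 0)) :=
        ediam_image_le_of_lipschitzOnWith ((hf _).mono Set.inter_subset_right)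
      _ ≤ L * ediam C := by gcongr; exact Set.inter_subset_left
      _ ≤ L * (L ^ (k + 1) * ⨆ j, ediam (Xs j)) := by gcongr; exact ih _
      _ = L ^ (k + 1 + 1) * ⨆ j, ediam (Xs j) := by rw [← mul_assoc, ← pow_succ']

theorem tendsto_ediam_cylinder [PseudoEMetricSpace X] {K : Fin n → ℝ≥0} (hK : ∀ j, K j < 1)
    (hf : ∀ j, LipschitzOnWith (K j) (f j) (Xs j)) (hXs : ∀ j, ediam (Xs j) ≠ ⊤)
    (b : ℕ → Fin n) : Tendsto (fun k => ediam (cylinder f Xs k b)) atTop (𝓝 0) := by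
  let L := Finset.univ.sup K
  have hL : (L : ℝ≥0∞) < 1 :=
    ENNReal.coe_lt_one_iff.2 ((Finset.sup_lt_iff zero_lt_one).2 fun j _ => hK j)
  have hfL (j : Fin n) : LipschitzOnWith L (f j) (Xs j) :=
    (hf j).weaken (Finset.le_sup (Finset.mem_univ j))
  have hD : ⨆ j, ediam (Xs j) ≠ ⊤ := by
    have : Nonempty (Fin n) := ⟨b 0⟩
    obtain ⟨i, hi⟩ := exists_eq_ciSup_of_finite (f := fun j => ediam (Xs j))
    exact hi ▸ hXs i
  have hpow : Tendsto (fun k => (L : ℝ≥0∞) ^ (k + 1)) atTop (𝓝 0) :=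
    (ENNReal.tendsto_pow_atTop_nhds_zero_of_lt_one hL).comp (tendsto_add_atTop_nat 1)
  have hbound : Tendsto (fun k => (L : ℝ≥0∞) ^ (k + 1) * ⨆ j, ediam (Xs j)) atTop (𝓝 0) := by
    simpa only [zero_mul] using ENNReal.Tendsto.mul_const hpow (Or.inr hD)
  exact tendsto_of_tendsto_of_tendsto_of_le_of_le tendsto_const_nhds hbound
    (fun _ => zero_le) fun k => ediam_cylinder_le hfL k b

theorem subsingleton_iInter_cylinder [EMetricSpace X] {K : Fin n → ℝ≥0} (hK : ∀ j, K j < 1)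
    (hf : ∀ j, LipschitzOnWith (K j) (f j) (Xs j)) (hXs : ∀ j, ediam (Xs j) ≠ ⊤)
    (b : ℕ → Fin n) : (⋂ k, cylinder f Xs k b).Subsingleton :=
  ediam_eq_zero_iff.1 <| le_zero_iff.1 <| ge_of_tendsto' (tendsto_ediam_cylinder hK hf hXs b)
    fun k => ediam_mono (Set.iInter_subset _ k)

theorem concat_mem_codeSpace_and_codeMap_general [EMetricSpace X] {K : Fin n → ℝ≥0}
    (hK : ∀ j, K j < 1) (hf : ∀ j, LipschitzOnWith (K j) (f j) (Xs j))
    (hXs : ∀ j, ediam (Xs j) ≠ ⊤) {π : (ℕ → Fin n) → X}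
    (hπ : ∀ b ∈ codeSpace f Xs, ∀ k, π b ∈ cylinder f Xs k b)
    {b : ℕ → Fin n} (hb : b ∈ codeSpace f Xs) {j : Fin n} (hj : π b ∈ Xs j) :
    concat b j ∈ codeSpace f Xs ∧ π (concat b j) = f j (π b) := by
  have himage : f j (π b) ∈ ⋂ k, cylinder f Xs k (concat b j) :=
    mapsTo_iInter_cylinder_concat b j ⟨Set.mem_iInter.2 (hπ b hb), hj⟩
  have hconcat : concat b j ∈ codeSpace f Xs := fun k => ⟨_, Set.mem_iInter.1 himage k⟩
  exact ⟨hconcat, subsingleton_iInter_cylinder hK hf hXs (concat b j)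
    (Set.mem_iInter.2 (hπ _ hconcat)) himage⟩

end Cylinder

/-- For a contractive local IFS with code map `π` (so `π b` is the
unique point of `⋂_{k ≥ 1} V_b(k)` for `b` in the code space), if `b` is in the code
space and `π b ∈ X_j`, then `b ∗ j` is in the code space and `π (b ∗ j) = f j (π b)`. -/
theorem concat_mem_codeSpace_and_codeMap {X : Type*} [MetricSpace X] [CompactSpace X]
    {n : ℕ} (hn : 0 < n)
    (Xs : Fin n → Set X) (hXs : ∀ j, IsClosed (Xs j))
    (f : Fin n → X → X)
    (lam : Fin n → ℝ) (hlam0 : ∀ j, 0 ≤ lam j) (hlam1 : ∀ j, lam j < 1)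
    (hcontr : ∀ j, ∀ x ∈ Xs j, ∀ y ∈ Xs j, dist (f j x) (f j y) ≤ lam j * dist x y)
    (π : (ℕ → Fin n) → X)
    (hπ : ∀ b ∈ codeSpace f Xs, ∀ k : ℕ, π b ∈ cylinder f Xs k b)
    (b : ℕ → Fin n) (hb : b ∈ codeSpace f Xs) (j : Fin n) (hj : π b ∈ Xs j) :
    concat b j ∈ codeSpace f Xs ∧ π (concat b j) = f j (π b) :=
  concat_mem_codeSpace_and_codeMap_general (K := fun i => ⟨lam i, hlam0 i⟩) hlam1
    (fun i => LipschitzOnWith.of_dist_le_mul (hcontr i))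
    (fun i => (Bornology.IsBounded.all (Xs i)).ediam_ne_top) hπ hb hj
end

section
/- Let a contractive local IFS on a compact metric space X have local attractor A := ⋃{B ⊆ X : F(B) = B} with A ≠ ∅, code space Σ and code map π. Then π(Σ) = A; that is, A = {x ∈ X : there exists b ∈ Σ with x ∈ V_b(k) for all k ≥ 1}. -/
/-! Words whose cylinders have a common point are governed by the shift: by compactness the
intersection `L b` of the cylinders of a word `b` satisfies
`L b = f (b 0) '' (L (σ b) ∩ Xs (b 0))`, so that `⋃ b, L b` is a fixed point of the
Hutchinson–Barnsley operator. It is the greatest one: in a set `B` contained in its own image,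
each point can be pulled back within `B` again and again, and the indices of the maps used
along the way form a word whose cylinders all contain the point.
-/

open Set

/-- The local Hutchinson–Barnsley operator `B ↦ ⋃ j, f j (B ∩ Xs j)`, whose fixed points make up
the local attractor. -/
def hutchinson {X : Type*} {n : ℕ} (f : Fin n → X → X) (Xs : Fin n → Set X) (B : Set X) : Set X :=
  ⋃ j, f j '' (B ∩ Xs j)

/-- The points lying in all cylinders of the word `b`; for a contractive local IFS and `b` in the
code space this is the singleton `{π b}`. -/
def limitSet {X : Type*} {n : ℕ} (f : Fin n → X → X) (Xs : Fin n → Set X) (b : ℕ → Fin n) :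
    Set X :=
  ⋂ k, cylinder f Xs k b

/-- The image of the code space under the code map. The union runs over all words, since
`limitSet f Xs b` is empty for `b` outside the code space. -/
def codeImage {X : Type*} {n : ℕ} (f : Fin n → X → X) (Xs : Fin n → Set X) : Set X :=
  ⋃ b, limitSet f Xs b

theorem image_iInter_of_directed_isCompact {X Y ι : Type*} [TopologicalSpace X] [T2Space X]
    [TopologicalSpace Y] [T1Space Y] [Nonempty ι] {g : X → Y} {K : ι → Set X}
    (hdir : Directed (· ⊇ ·) K) (hK : ∀ i, IsCompact (K i)) (hg : ∀ i, ContinuousOn g (K i)) :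
    g '' ⋂ i, K i = ⋂ i, g '' K i := by
  refine (image_iInter_subset K g).antisymm fun y hy => ?_
  have fiber_closed : ∀ i, IsClosed (K i ∩ g ⁻¹' {y}) := fun i =>
    (hg i).preimage_isClosed_of_isClosed (hK i).isClosed isClosed_singleton
  have fiber_compact : ∀ i, IsCompact (K i ∩ g ⁻¹' {y}) := fun i =>
    (hK i).of_isClosed_subset (fiber_closed i) inter_subset_left
  have fiber_nonempty : ∀ i, (K i ∩ g ⁻¹' {y}).Nonempty := mem_iInter.1 hy
  have fiber_directed : Directed (· ⊇ ·) fun i => K i ∩ g ⁻¹' {y} :=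
    fun i j => (hdir i j).imp fun _ h =>
      ⟨inter_subset_inter_left _ h.1, inter_subset_inter_left _ h.2⟩
  obtain ⟨x, hx⟩ := IsCompact.nonempty_iInter_of_directed_nonempty_isCompact_isClosed _
    fiber_directed fiber_nonempty fiber_compact fiber_closed
  rw [← iInter_inter] at hx
  exact ⟨x, hx⟩

section LocalIFS

variable {X : Type*} {n : ℕ} {f : Fin n → X → X} {Xs : Fin n → Set X}

theorem cylinder_succ_subset (k : ℕ) (b : ℕ → Fin n) :
    cylinder f Xs (k + 1) b ⊆ cylinder f Xs k b := by
  induction k generalizing b with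
  | zero => exact image_mono inter_subset_right
  | succ k ih => exact image_mono (inter_subset_inter_left _ (ih _))

theorem antitone_cylinder (b : ℕ → Fin n) : Antitone fun k => cylinder f Xs k b :=
  antitone_nat_of_succ_le fun k => cylinder_succ_subset k b

theorem codeImage_eq_setOf_mem_codeSpace :
    codeImage f Xs = {x | ∃ b ∈ codeSpace f Xs, ∀ k, x ∈ cylinder f Xs k b} := by
  ext x
  simp only [codeImage, limitSet, mem_iUnion, mem_iInter]
  exact ⟨fun ⟨b, hb⟩ => ⟨b, fun k => ⟨x, hb k⟩, hb⟩, fun ⟨b, _, hb⟩ => ⟨b, hb⟩⟩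

theorem subset_codeImage_of_subset_hutchinson {B : Set X} (hB : B ⊆ hutchinson f Xs B) :
    B ⊆ codeImage f Xs := by
  have exists_preimage : ∀ z : B, ∃ (j : Fin n) (y : B), (y : X) ∈ Xs j ∧ f j y = z := by
    intro z
    obtain ⟨j, y, ⟨hyB, hyX⟩, hyz⟩ := mem_iUnion.1 (hB z.2)
    exact ⟨j, ⟨y, hyB⟩, hyX, hyz⟩
  choose index pullback pullback_mem map_pullback using exists_preimage
  let code (z : B) (m : ℕ) : Fin n := index (pullback^[m] z)
  have mem_cylinder_code : ∀ (k : ℕ) (z : B), (z : X) ∈ cylinder f Xs k (code z) := by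
    intro k
    induction k with
    | zero => exact fun z => ⟨pullback z, pullback_mem z, map_pullback z⟩
    | succ k ih =>
      exact fun z => ⟨pullback z, ⟨ih (pullback z), pullback_mem z⟩, map_pullback z⟩
  exact fun x hx => mem_iUnion.2 ⟨code ⟨x, hx⟩, mem_iInter.2 fun k => mem_cylinder_code k ⟨x, hx⟩⟩

variable [TopologicalSpace X] [T2Space X]

theorem isCompact_cylinder (hXs : ∀ j, IsCompact (Xs j)) (hf : ∀ j, ContinuousOn (f j) (Xs j))
    (k : ℕ) (b : ℕ → Fin n) : IsCompact (cylinder f Xs k b) := by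
  induction k generalizing b with
  | zero => exact (hXs _).image_of_continuousOn (hf _)
  | succ k ih =>
    exact ((ih _).inter (hXs _)).image_of_continuousOn ((hf _).mono inter_subset_right)

theorem limitSet_eq_image_limitSet_shift (hXs : ∀ j, IsCompact (Xs j))
    (hf : ∀ j, ContinuousOn (f j) (Xs j)) (b : ℕ → Fin n) :
    limitSet f Xs b = f (b 0) '' (limitSet f Xs (fun m => b (m + 1)) ∩ Xs (b 0)) := by
  set V : ℕ → Set X := fun k => cylinder f Xs k (fun m => b (m + 1)) ∩ Xs (b 0)
  have V_antitone : Antitone V := fun _ _ h => inter_subset_inter_left _ (antitone_cylinder _ h)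
  have V_compact : ∀ k, IsCompact (V k) := fun k => (isCompact_cylinder hXs hf k _).inter (hXs _)
  calc limitSet f Xs b
    _ = ⋂ k, cylinder f Xs (k + 1) b := ((antitone_cylinder b).iInf_nat_add 1).symm
    _ = f (b 0) '' ⋂ k, V k :=
      (image_iInter_of_directed_isCompact V_antitone.directed_ge V_compact
        fun _ => (hf _).mono inter_subset_right).symm
    _ = f (b 0) '' (limitSet f Xs (fun m => b (m + 1)) ∩ Xs (b 0)) := by
      rw [limitSet, iInter_inter]

theorem hutchinson_codeImage (hXs : ∀ j, IsCompact (Xs j))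
    (hf : ∀ j, ContinuousOn (f j) (Xs j)) :
    hutchinson f Xs (codeImage f Xs) = codeImage f Xs := by
  apply Subset.antisymm
  · refine iUnion_subset fun j => ?_
    rintro _ ⟨y, ⟨hy, hyj⟩, rfl⟩
    obtain ⟨b, hb⟩ := mem_iUnion.1 hy
    let jb : ℕ → Fin n := fun m => Nat.casesOn m j b
    have hjb : f j y ∈ limitSet f Xs jb := by
      rw [limitSet_eq_image_limitSet_shift hXs hf]
      exact ⟨y, ⟨hb, hyj⟩, rfl⟩
    exact mem_iUnion.2 ⟨jb, hjb⟩
  · refine iUnion_subset fun b => ?_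
    rw [limitSet_eq_image_limitSet_shift hXs hf]
    exact subset_iUnion_of_subset (b 0)
      (image_mono (inter_subset_inter_left _ (subset_iUnion (limitSet f Xs) _)))

theorem isGreatest_codeImage (hXs : ∀ j, IsCompact (Xs j))
    (hf : ∀ j, ContinuousOn (f j) (Xs j)) :
    IsGreatest {B | hutchinson f Xs B = B} (codeImage f Xs) :=
  ⟨hutchinson_codeImage hXs hf, fun _ hB => subset_codeImage_of_subset_hutchinson hB.ge⟩

end LocalIFS

theorem attractor_eq_image_codeSpace_general {X : Type*} [TopologicalSpace X] [T2Space X] {n : ℕ}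
    {f : Fin n → X → X} {Xs : Fin n → Set X} (hXs : ∀ j, IsCompact (Xs j))
    (hf : ∀ j, ContinuousOn (f j) (Xs j)) :
    ⋃₀ {B | hutchinson f Xs B = B} = {x | ∃ b ∈ codeSpace f Xs, ∀ k, x ∈ cylinder f Xs k b} :=
  (isGreatest_codeImage hXs hf).csSup_eq.trans codeImage_eq_setOf_mem_codeSpace

/-- For a contractive local IFS with nonempty local attractor
`A = ⋃ {B : F B = B}`, the image of the code space under the code map equals `A`:
`A = {x : ∃ b ∈ Σ with x ∈ V_b(k) for all k ≥ 1}`. -/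
theorem attractor_eq_image_codeSpace {X : Type*} [MetricSpace X] [CompactSpace X]
    {n : ℕ} (hn : 0 < n)
    (Xs : Fin n → Set X) (hXs : ∀ j, IsClosed (Xs j))
    (f : Fin n → X → X)
    (lam : Fin n → ℝ) (hlam0 : ∀ j, 0 ≤ lam j) (hlam1 : ∀ j, lam j < 1)
    (hcontr : ∀ j, ∀ x ∈ Xs j, ∀ y ∈ Xs j, dist (f j x) (f j y) ≤ lam j * dist x y)
    (F : Set X → Set X) (hF : ∀ B, F B = ⋃ j, f j '' (B ∩ Xs j))
    (A : Set X) (hA : A = ⋃₀ {B : Set X | F B = B}) (hAne : A.Nonempty) :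
    A = {x : X | ∃ b ∈ codeSpace f Xs, ∀ k : ℕ, x ∈ cylinder f Xs k b} := by
  obtain rfl : F = hutchinson f Xs := funext hF
  have hf : ∀ j, ContinuousOn (f j) (Xs j) := fun j =>
    (LipschitzOnWith.of_dist_le_mul (K := ⟨lam j, hlam0 j⟩) (hcontr j)).continuousOn
  exact hA.trans (attractor_eq_image_codeSpace_general (fun j => (hXs j).isCompact) hf)
end

section
/- Let a local IFS on a compact metric space X have local Hutchinson–Barnsley operator F and local attractor A := ⋃{B ⊆ X : F(B) = B}. Then the following are equivalent: (1) A ≠ ∅; (2) there exists a point x ∈ X with an infinite orbit. Moreover, if A ≠ ∅ then there exists a point x ∈ A with an infinite orbit; in particular A^∞ ≠ ∅. -/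
/-- The orbit of a point `x` of a local IFS directed by the itinerary `a`:
`orbitSeq f x a 0 = x` and `orbitSeq f x a (i+1) = f (a i) (orbitSeq f x a i)`. -/
def orbitSeq {X : Type*} {n : ℕ} (f : Fin n → X → X) (x : X) (a : ℕ → Fin n) : ℕ → X
  | 0 => x
  | i + 1 => f (a i) (orbitSeq f x a i)

open scoped SetRel

/-!
Record the local IFS as a single relation `R` on `X`, where `x` is related to `y` when
`y = f j x` for some `j` with `x ∈ X_j`. Then `F` is the image operator of `R`, infinite orbits
are infinite forward chains of `R`, and `R` is closed. A nonempty set `B = F B` yields finite chains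
of every length by picking preimages inside `B`, and so does an infinite orbit by truncation.
Compactness turns finite chains of every length into a chain indexed by `ℤ`. Its range `C`
satisfies `C ⊆ F C`, so it lies in the attractor, and each of its points has an infinite orbit.
-/

theorem le_sSup_fixedPoints_of_le_map {α : Type*} [CompleteLattice α] {g : α → α}
    (hg : Monotone g) {a : α} (ha : a ≤ g a) : a ≤ sSup (Function.fixedPoints g) :=
  let G : α →o α := ⟨g, hg⟩
  (G.le_gfp ha).trans (le_sSup G.isFixedPt_gfp)

theorem isClosed_graphOn {X Y : Type*} [TopologicalSpace X] [TopologicalSpace Y] [T2Space Y]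
    {s : Set X} (hs : IsClosed s) {g : X → Y} (hg : ContinuousOn g s) :
    IsClosed (s.graphOn g) := by
  have hpair : ContinuousOn (Prod.map g id) (s ×ˢ (Set.univ : Set Y)) :=
    hg.prodMap continuousOn_id
  convert! hpair.preimage_isClosed_of_isClosed (hs.prod isClosed_univ) isClosed_diagonal
  ext p
  simp

section Chains

variable {X : Type*} {R : SetRel X X}

theorem infiniteDimensional_of_subset_image {B : Set X} (hne : B.Nonempty)
    (hB : B ⊆ R.image B) : R.InfiniteDimensional := by
  have exists_head_mem (m : ℕ) : ∃ s : RelSeries R, s.length = m ∧ s.head ∈ B := by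
    induction m with
    | zero =>
      obtain ⟨x, hx⟩ := hne
      exact ⟨RelSeries.singleton R x, rfl, hx⟩
    | succ m ih =>
      obtain ⟨s, hlen, hs⟩ := ih
      obtain ⟨x, hx, hrel⟩ := hB hs
      exact ⟨s.cons x hrel, by simp [hlen], hx⟩
  exact ⟨fun m => (exists_head_mem m).imp fun _ => And.left⟩

theorem infiniteDimensional_of_chain {u : ℕ → X} (hu : ∀ i, u i ~[R] u (i + 1)) :
    R.InfiniteDimensional :=
  ⟨fun m => ⟨⟨m, fun i => u i, fun i => hu i⟩, rfl⟩⟩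

theorem range_subset_sUnion_fixedPoints_image {u : ℤ → X} (hu : ∀ i, u i ~[R] u (i + 1)) :
    Set.range u ⊆ ⋃₀ Function.fixedPoints R.image := by
  refine le_sSup_fixedPoints_of_le_map R.image_mono ?_
  rintro _ ⟨i, rfl⟩
  exact ⟨u (i - 1), Set.mem_range_self _, by simpa using hu (i - 1)⟩

theorem exists_int_chain_on_Ico (hinf : R.InfiniteDimensional) (m : ℕ) :
    ∃ u : ℤ → X, ∀ i ∈ Set.Ico (-m : ℤ) m, u i ~[R] u (i + 1) := by
  obtain ⟨s, hs⟩ := hinf.exists_relSeries_with_length (2 * m)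
  refine ⟨fun i => s (Fin.ofNat _ (i + m).toNat), fun i hi => ?_⟩
  obtain ⟨hlo, hhi⟩ := hi
  obtain ⟨k, rfl⟩ : ∃ k : ℕ, i = k - m := ⟨(i + m).toNat, by lia⟩
  have hk : k < s.length := by lia
  have toNat_succ_eq : ((k : ℤ) - m + 1 + m).toNat = k + 1 := by lia
  convert! s.step ⟨k, hk⟩ using 3 <;> ext
  · simp [Nat.mod_eq_of_lt (hk.trans s.length.lt_succ_self)]
  · simp [toNat_succ_eq, Nat.mod_eq_of_lt (Nat.succ_lt_succ hk)]

theorem exists_int_chain [TopologicalSpace X] [CompactSpace X]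
    (hR : IsClosed R) (hinf : R.InfiniteDimensional) : ∃ u : ℤ → X, ∀ i, u i ~[R] u (i + 1) := by
  let C (m : ℕ) : Set (ℤ → X) := ⋂ i ∈ Set.Ico (-m : ℤ) m, {u | u i ~[R] u (i + 1)}
  have isClosed_C (m : ℕ) : IsClosed (C m) :=
    isClosed_biInter fun i _ =>
      hR.preimage (f := fun u : ℤ → X => (u i, u (i + 1))) (by fun_prop)
  have nonempty_C (m : ℕ) : (C m).Nonempty :=
    (exists_int_chain_on_Ico hinf m).imp fun _ => Set.mem_iInter₂.2
  have C_succ_subset (m : ℕ) : C (m + 1) ⊆ C m :=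
    Set.biInter_subset_biInter_left (Set.Ico_subset_Ico (by lia) (by lia))
  obtain ⟨u, hu⟩ := IsCompact.nonempty_iInter_of_sequence_nonempty_isCompact_isClosed C
    C_succ_subset nonempty_C (isClosed_C 0).isCompact isClosed_C
  refine ⟨u, fun i => ?_⟩
  exact Set.mem_iInter₂.1 (Set.mem_iInter.1 hu (i.natAbs + 1)) i ⟨by lia, by lia⟩

end Chains

/-- The one-step relation of the local IFS with maps `f j` on the domains `Xs j`: it relates `x` to
`f j x` whenever `x ∈ Xs j`. Its image operator is the local Hutchinson–Barnsley operator. -/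
def stepRel {ι X : Type*} (Xs : ι → Set X) (f : ι → X → X) : SetRel X X :=
  ⋃ j, (Xs j).graphOn (f j)

section StepRel

variable {ι X : Type*} {Xs : ι → Set X} {f : ι → X → X}

theorem mem_stepRel {x y : X} : x ~[stepRel Xs f] y ↔ ∃ j, x ∈ Xs j ∧ f j x = y := by
  simp [stepRel]

theorem image_stepRel (B : Set X) : (stepRel Xs f).image B = ⋃ j, f j '' (B ∩ Xs j) := by
  ext y
  simp only [SetRel.mem_image, mem_stepRel, Set.mem_iUnion, Set.mem_image, Set.mem_inter_iff]
  tauto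

theorem isClosed_stepRel [Finite ι] [TopologicalSpace X] [T2Space X]
    (hXs : ∀ j, IsClosed (Xs j)) (hf : ∀ j, ContinuousOn (f j) (Xs j)) :
    IsClosed (stepRel Xs f) :=
  isClosed_iUnion_of_finite fun j => isClosed_graphOn (hXs j) (hf j)

end StepRel

section Orbits

variable {X : Type*} {n : ℕ} {Xs : Fin n → Set X} {f : Fin n → X → X}

theorem orbitSeq_stepRel_succ {x : X} {a : ℕ → Fin n} {i : ℕ}
    (hi : orbitSeq f x a i ∈ Xs (a i)) :
    orbitSeq f x a i ~[stepRel Xs f] orbitSeq f x a (i + 1) :=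
  mem_stepRel.2 ⟨a i, hi, rfl⟩

theorem exists_itinerary_of_chain {u : ℕ → X} (hu : ∀ i, u i ~[stepRel Xs f] u (i + 1)) :
    ∃ a : ℕ → Fin n, ∀ i, orbitSeq f (u 0) a i ∈ Xs (a i) := by
  choose a ha hstep using fun i => mem_stepRel.1 (hu i)
  have orbitSeq_eq (i : ℕ) : orbitSeq f (u 0) a i = u i := by
    induction i with
    | zero => rfl
    | succ i ih => rw [orbitSeq, ih, hstep]
  exact ⟨a, fun i => (orbitSeq_eq i).symm ▸ ha i⟩

theorem exists_mem_sUnion_fixedPoints_itinerary [TopologicalSpace X] [CompactSpace X]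
    (hclosed : IsClosed (stepRel Xs f)) (hinf : (stepRel Xs f).InfiniteDimensional) :
    ∃ x ∈ ⋃₀ Function.fixedPoints (stepRel Xs f).image,
      ∃ a : ℕ → Fin n, ∀ i, orbitSeq f x a i ∈ Xs (a i) := by
  obtain ⟨u, hu⟩ := exists_int_chain hclosed hinf
  exact ⟨u 0, range_subset_sUnion_fixedPoints_image hu (Set.mem_range_self 0),
    exists_itinerary_of_chain (u := fun i => u i) fun i => hu i⟩

end Orbits

theorem attractor_nonempty_iff_infinite_orbit_general {X : Type*} [TopologicalSpace X]
    [CompactSpace X] [T2Space X] {n : ℕ}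
    (Xs : Fin n → Set X) (hXs : ∀ j, IsClosed (Xs j))
    (f : Fin n → X → X) (hf : ∀ j, ContinuousOn (f j) (Xs j))
    (F : Set X → Set X) (hF : ∀ B, F B = ⋃ j, f j '' (B ∩ Xs j))
    (A : Set X) (hA : A = ⋃₀ {B : Set X | F B = B}) :
    (A.Nonempty ↔ ∃ (x : X) (a : ℕ → Fin n), ∀ i : ℕ, orbitSeq f x a i ∈ Xs (a i)) ∧
      (A.Nonempty →
        ∃ x ∈ A, ∃ a : ℕ → Fin n, ∀ i : ℕ, orbitSeq f x a i ∈ Xs (a i)) := by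
  obtain rfl : F = (stepRel Xs f).image := funext fun B => (hF B).trans (image_stepRel B).symm
  have exists_of_infiniteDimensional (hinf : (stepRel Xs f).InfiniteDimensional) :
      ∃ x ∈ A, ∃ a : ℕ → Fin n, ∀ i, orbitSeq f x a i ∈ Xs (a i) :=
    hA ▸ exists_mem_sUnion_fixedPoints_itinerary (isClosed_stepRel hXs hf) hinf
  have exists_of_nonempty (hne : A.Nonempty) :
      ∃ x ∈ A, ∃ a : ℕ → Fin n, ∀ i, orbitSeq f x a i ∈ Xs (a i) := by
    obtain ⟨x, B, hB, hx⟩ := hA ▸ hne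
    exact exists_of_infiniteDimensional (infiniteDimensional_of_subset_image ⟨x, hx⟩ hB.ge)
  refine ⟨⟨fun hne => (exists_of_nonempty hne).imp fun _ => And.right, ?_⟩, exists_of_nonempty⟩
  rintro ⟨x, a, ha⟩
  have hinf : (stepRel Xs f).InfiniteDimensional :=
    infiniteDimensional_of_chain (u := orbitSeq f x a) fun i => orbitSeq_stepRel_succ (ha i)
  exact (exists_of_infiniteDimensional hinf).imp fun _ => And.left

/-- For a local IFS on a compact metric space with local attractor
`A = ⋃ {B : F B = B}`, the following are equivalent: (1) `A ≠ ∅`; (2) there is a point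
`x ∈ X` with an infinite orbit, i.e. an admissible itinerary `a` with
`x_i ∈ X_{a i}` for all `i`.  Moreover, if `A ≠ ∅` then some point of `A` has an
infinite orbit; in particular `A^∞ ≠ ∅`. -/
theorem attractor_nonempty_iff_infinite_orbit {X : Type*} [MetricSpace X] [CompactSpace X]
    {n : ℕ} (hn : 0 < n)
    (Xs : Fin n → Set X) (hXs : ∀ j, IsClosed (Xs j))
    (f : Fin n → X → X) (hf : ∀ j, ContinuousOn (f j) (Xs j))
    (F : Set X → Set X) (hF : ∀ B, F B = ⋃ j, f j '' (B ∩ Xs j))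
    (A : Set X) (hA : A = ⋃₀ {B : Set X | F B = B}) :
    (A.Nonempty ↔ ∃ (x : X) (a : ℕ → Fin n), ∀ i : ℕ, orbitSeq f x a i ∈ Xs (a i)) ∧
      (A.Nonempty →
        ∃ x ∈ A, ∃ a : ℕ → Fin n, ∀ i : ℕ, orbitSeq f x a i ∈ Xs (a i)) :=
  attractor_nonempty_iff_infinite_orbit_general Xs hXs f hf F hF A hA
end
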